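/- There exists a 2-(24,4,1) packing with 42 blocks whose leave is a vertex-disjoint union of three cycles of length 8, covering all 24 points (leave type 8^3). -/

import Mathlib

/-!
The packing is explicit. The points are `0, …, 23`, and the three leave cycles are
`(8i, 8i + 1, …, 8i + 7)` for `i = 0, 1, 2`. Its 42 blocks cover `42 * 6 = 252` pairs, all the pairs
outside these cycles exactly once, since `276 - 24 = 252`. The blocks were obtained by solving the
exact cover problem for these pairs under an assumed automorphism group of order 6.

The proof is a finite verification: distinct blocks share at most one point
(`blockTable_inter`), and a pair of points is uncovered exactly when it is an edge of one of
the cycles (`covered_eq`). These two checks are computations with natural number literals; the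
remaining lemmas transfer them to finsets of `Fin 24`.
-/

/-- A 2-(24,4,1) packing: a collection of 4-element blocks on 24 points such that
every pair of distinct points lies in at most one block. -/
def IsPacking (B : Finset (Finset (Fin 24))) : Prop :=
  (∀ b ∈ B, b.card = 4) ∧
  ∀ p q : Fin 24, p ≠ q → ∀ b₁ ∈ B, ∀ b₂ ∈ B,
    p ∈ b₁ → q ∈ b₁ → p ∈ b₂ → q ∈ b₂ → b₁ = b₂

/-- Adjacency in the leave of a packing: the pair of distinct points is covered by no block. -/
def LeaveAdj (B : Finset (Finset (Fin 24))) (p q : Fin 24) : Prop :=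
  p ≠ q ∧ ∀ b ∈ B, ¬ (p ∈ b ∧ q ∈ b)

/-- The leave of the packing `B` is a vertex-disjoint union of cycles whose lengths are
given by the list `L`, covering all 24 points. -/
def LeaveIsCycleType (B : Finset (Finset (Fin 24))) (L : List ℕ) : Prop :=
  ∃ f : (i : Fin L.length) → ZMod (L.get i) → Fin 24,
    Function.Bijective (fun x : Σ i : Fin L.length, ZMod (L.get i) => f x.1 x.2) ∧
    ∀ p q : Fin 24, LeaveAdj B p q ↔
      ∃ i k, (p = f i k ∧ q = f i (k + 1)) ∨ (q = f i k ∧ p = f i (k + 1))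

/-- The blocks of the packing, as lists of natural numbers below `24`. -/
def blockTable : List (List ℕ) :=
  [[0, 2, 5, 22], [0, 3, 10, 20], [0, 4, 19, 23], [0, 6, 9, 16], [0, 8, 14, 21],
   [0, 11, 13, 17], [0, 12, 15, 18], [1, 3, 11, 21], [1, 4, 6, 18], [1, 5, 10, 14],
   [1, 7, 9, 20], [1, 8, 17, 23], [1, 12, 16, 22], [1, 13, 15, 19], [2, 4, 13, 20],
   [2, 6, 17, 21], [2, 7, 11, 18], [2, 8, 16, 19], [2, 9, 12, 14], [2, 10, 15, 23],
   [3, 5, 13, 16], [3, 6, 15, 22], [3, 7, 8, 12], [3, 9, 17, 19], [3, 14, 18, 23],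
   [4, 7, 14, 16], [4, 8, 11, 22], [4, 9, 15, 21], [4, 10, 12, 17], [5, 7, 15, 17],
   [5, 8, 18, 20], [5, 9, 11, 23], [5, 12, 19, 21], [6, 8, 10, 13], [6, 11, 14, 19],
   [6, 12, 20, 23], [7, 10, 19, 22], [7, 13, 21, 23], [9, 13, 18, 22], [10, 16, 18, 21],
   [11, 15, 16, 20], [14, 17, 20, 22]]

/-- The block given by a list of point labels. -/
def toBlock (l : List ℕ) : Finset (Fin 24) :=
  Finset.univ.filter fun p => p.val ∈ l

theorem mem_toBlock {l : List ℕ} {p : Fin 24} : p ∈ toBlock l ↔ p.val ∈ l := by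
  simp [toBlock]

/-- The successor of the point `p` on its leave cycle `(8i, 8i + 1, …, 8i + 7)`. -/
def cycleSucc (p : ℕ) : ℕ := p / 8 * 8 + (p + 1) % 8

/-- Whether some block of the table contains both `p` and `q`. -/
def covered (p q : ℕ) : Bool := blockTable.any fun b => b.any (Nat.beq p) && b.any (Nat.beq q)

theorem covered_iff {p q : ℕ} : covered p q = true ↔ ∃ b ∈ blockTable, p ∈ b ∧ q ∈ b := by
  simp [covered, Nat.beq_eq]

/-- A pair of points fails to be covered exactly when it is an edge of a leave cycle. -/
theorem covered_eq : ∀ p < 24, ∀ q < 24, p ≠ q →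
    covered p q = !(Nat.beq q (cycleSucc p) || Nat.beq p (cycleSucc q)) := by
  decide +kernel

theorem toBlock_card : ∀ b ∈ blockTable, (toBlock b).card = 4 := by
  decide +kernel

theorem blockTable_inter : ∀ b₁ ∈ blockTable, ∀ b₂ ∈ blockTable,
    b₁ = b₂ ∨ (b₁.countP fun x => b₂.any (Nat.beq x)) ≤ 1 := by
  decide +kernel

theorem blockTable_nodup : blockTable.Nodup := by
  decide +kernel

/-- Two table entries whose blocks share two distinct points are equal. -/
theorem eq_of_two_common {b₁ b₂ : List ℕ} (h₁ : b₁ ∈ blockTable) (h₂ : b₂ ∈ blockTable)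
    {p q : Fin 24} (hpq : p ≠ q) (hp₁ : p ∈ toBlock b₁) (hq₁ : q ∈ toBlock b₁)
    (hp₂ : p ∈ toBlock b₂) (hq₂ : q ∈ toBlock b₂) : b₁ = b₂ := by
  rw [mem_toBlock] at hp₁ hq₁ hp₂ hq₂
  refine (blockTable_inter b₁ h₁ b₂ h₂).resolve_right fun hle => ?_
  rw [List.countP_eq_length_filter] at hle
  have hp : p.val ∈ b₁.filter fun x => b₂.any (Nat.beq x) := by
    simpa [Nat.beq_eq, hp₁] using hp₂
  have hq : q.val ∈ b₁.filter fun x => b₂.any (Nat.beq x) := by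
    simpa [Nat.beq_eq, hq₁] using hq₂
  generalize (b₁.filter fun x => b₂.any (Nat.beq x)) = l at hle hp hq
  match l, hle with
  | [x], _ =>
    rw [List.mem_singleton] at hp hq
    exact hpq (Fin.ext (hp.trans hq.symm))

theorem toBlock_injOn {b₁ b₂ : List ℕ} (h₁ : b₁ ∈ blockTable) (h₂ : b₂ ∈ blockTable)
    (h : toBlock b₁ = toBlock b₂) : b₁ = b₂ := by
  have hcard : 1 < (toBlock b₁).card := by rw [toBlock_card b₁ h₁]; norm_num
  obtain ⟨p, hp, q, hq, hpq⟩ := Finset.one_lt_card.1 hcard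
  exact eq_of_two_common h₁ h₂ hpq hp hq (h ▸ hp) (h ▸ hq)

/-- The set of blocks of the packing. -/
def packingBlocks : Finset (Finset (Fin 24)) :=
  blockTable.toFinset.image toBlock

theorem mem_packingBlocks {b : Finset (Fin 24)} :
    b ∈ packingBlocks ↔ ∃ l ∈ blockTable, toBlock l = b := by
  simp [packingBlocks]

/-- The leave consists of the pairs of consecutive points on the leave cycles. -/
theorem leaveAdj_packingBlocks (p q : Fin 24) : LeaveAdj packingBlocks p q ↔
    q.val = cycleSucc p.val ∨ p.val = cycleSucc q.val := by
  have hunc : (∀ b ∈ packingBlocks, ¬ (p ∈ b ∧ q ∈ b)) ↔ ¬ covered p.val q.val = true := by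
    simp [covered_iff, mem_packingBlocks, mem_toBlock]
  rw [LeaveAdj, hunc]
  by_cases hpq : p = q
  · subst hpq
    have : p.val ≠ cycleSucc p.val := by unfold cycleSucc; omega
    simp [this]
  · rw [covered_eq p.val p.isLt q.val q.isLt (fun h => hpq (Fin.ext h))]
    rw [Bool.not_eq_true, Bool.not_eq_false', Bool.or_eq_true, Nat.beq_eq, Nat.beq_eq]
    exact and_iff_right hpq

/-- The `k`-th vertex of the `i`-th leave cycle, namely the point `8 * i + k`. -/
def cyclePoint (i : Fin 3) (k : ZMod 8) : Fin 24 :=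
  ⟨8 * i.val + k.val, by have := k.val_lt; omega⟩

theorem cyclePoint_injective :
    ∀ (i j : Fin 3) (k l : ZMod 8), cyclePoint i k = cyclePoint j l → i = j ∧ k = l := by
  decide +kernel

theorem cyclePoint_surjective : ∀ p : Fin 24, ∃ i k, cyclePoint i k = p := by
  decide +kernel

theorem cyclePoint_add_one :
    ∀ (i : Fin 3) (k : ZMod 8), (cyclePoint i (k + 1)).val = cycleSucc (cyclePoint i k).val := by
  decide +kernel

theorem eq_cycleSucc_iff (p q : Fin 24) : q.val = cycleSucc p.val ↔
    ∃ i k, p = cyclePoint i k ∧ q = cyclePoint i (k + 1) := by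
  constructor
  · intro h
    obtain ⟨i, k, rfl⟩ := cyclePoint_surjective p
    exact ⟨i, k, rfl, Fin.ext (h.trans (cyclePoint_add_one i k).symm)⟩
  · rintro ⟨i, k, rfl, rfl⟩
    exact cyclePoint_add_one i k

/-- The vertices of the leave cycles, indexed as `LeaveIsCycleType` requires: the type
`ZMod ([8, 8, 8].get i)` reduces to `ZMod 8` only once `i` is a numeral. -/
def leaveCycles : (i : Fin [8, 8, 8].length) → ZMod ([8, 8, 8].get i) → Fin 24
  | 0 => cyclePoint 0
  | 1 => cyclePoint 1
  | 2 => cyclePoint 2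

theorem leaveCycles_bijective : Function.Bijective
    (fun x : Σ i : Fin [8, 8, 8].length, ZMod ([8, 8, 8].get i) => leaveCycles x.1 x.2) := by
  constructor
  · rintro ⟨i, k⟩ ⟨j, l⟩ h
    match i, j, k, l, h with
    | 0, 0, k, l, h => exact congrArg (Sigma.mk 0) (cyclePoint_injective 0 0 k l h).2
    | 1, 1, k, l, h => exact congrArg (Sigma.mk 1) (cyclePoint_injective 1 1 k l h).2
    | 2, 2, k, l, h => exact congrArg (Sigma.mk 2) (cyclePoint_injective 2 2 k l h).2
    | 0, 1, k, l, h => exact absurd (cyclePoint_injective 0 1 k l h).1 (by decide)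
    | 0, 2, k, l, h => exact absurd (cyclePoint_injective 0 2 k l h).1 (by decide)
    | 1, 0, k, l, h => exact absurd (cyclePoint_injective 1 0 k l h).1 (by decide)
    | 1, 2, k, l, h => exact absurd (cyclePoint_injective 1 2 k l h).1 (by decide)
    | 2, 0, k, l, h => exact absurd (cyclePoint_injective 2 0 k l h).1 (by decide)
    | 2, 1, k, l, h => exact absurd (cyclePoint_injective 2 1 k l h).1 (by decide)
  · intro p
    obtain ⟨i, k, h⟩ := cyclePoint_surjective p
    match i, h with
    | 0, h => exact ⟨⟨0, k⟩, h⟩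
    | 1, h => exact ⟨⟨1, k⟩, h⟩
    | 2, h => exact ⟨⟨2, k⟩, h⟩

/-- There is a 2-(24,4,1) packing with 42 blocks whose leave is a vertex-disjoint
union of cycles of lengths [8, 8, 8], covering all 24 points. -/
theorem exists_max_packing_with_leave_type :
    ∃ B : Finset (Finset (Fin 24)), IsPacking B ∧ B.card = 42 ∧
      LeaveIsCycleType B [8, 8, 8] := by
  refine ⟨packingBlocks, ⟨?_, ?_⟩, ?_, leaveCycles, leaveCycles_bijective, ?_⟩
  · intro b hb
    obtain ⟨l, hl, rfl⟩ := mem_packingBlocks.1 hb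
    exact toBlock_card l hl
  · intro p q hpq b₁ h₁ b₂ h₂ hp₁ hq₁ hp₂ hq₂
    obtain ⟨l₁, hl₁, rfl⟩ := mem_packingBlocks.1 h₁
    obtain ⟨l₂, hl₂, rfl⟩ := mem_packingBlocks.1 h₂
    rw [eq_of_two_common hl₁ hl₂ hpq hp₁ hq₁ hp₂ hq₂]
  · rw [packingBlocks, Finset.card_image_of_injOn, List.toFinset_card_of_nodup blockTable_nodup]
    · rfl
    · intro l₁ h₁ l₂ h₂ h
      exact toBlock_injOn (List.mem_toFinset.1 h₁) (List.mem_toFinset.1 h₂) h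
  · intro p q
    rw [leaveAdj_packingBlocks, eq_cycleSucc_iff, eq_cycleSucc_iff]
    simp only [← exists_or]
    constructor
    · rintro ⟨i, k, hk⟩
      match i, hk with
      | 0, hk => exact ⟨0, k, hk⟩
      | 1, hk => exact ⟨1, k, hk⟩
      | 2, hk => exact ⟨2, k, hk⟩
    · rintro ⟨i, k, hk⟩
      match i, k, hk with
      | 0, k, hk => exact ⟨0, k, hk⟩
      | 1, k, hk => exact ⟨1, k, hk⟩
      | 2, k, hk => exact ⟨2, k, hk⟩
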